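/- arXiv:2412.00764 — 2 statements merged into one kernel-verified Lean document; each statement's English description precedes it below -/
import Mathlib

section
/- For every z > 0, the recurrence coefficients γ_n = γ_n(z) of the monic orthogonal polynomials for the weight e^{−x⁴} on [−z, z] satisfy, for all n ≥ 2, the nonlinear difference relation z²·( n/2 − 2γ_n(γ_{n+1} + γ_n + γ_{n−1}) )² = γ_n·( n + 1/2 − 2γ_n(γ_{n+1} + γ_n + γ_{n−1}) − 2γ_{n+1}(γ_{n+2} + γ_{n+1} + γ_n) )·( n − 1/2 − 2γ_n(γ_{n+1} + γ_n + γ_{n−1}) − 2γ_{n−1}(γ_n + γ_{n−1} + γ_{n−2}) ). -/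
/-! Integrating `(p e^{-x⁴})'` over `[-z, z]` gives the Pearson equation
`L(p') - 4 L(x³ p) = e^{-z⁴} (p(z) - p(-z))` for the moment functional `L` of the weight.
Taking `p = P_{n+1} P_n` and `p = x P_n²`, and expanding with the three-term recurrence, expresses
`P_{n+1}(z) P_n(z)` and `P_n(z)²` through the recurrence coefficients. The nonlinear relation is
then the identity `(P_{n+1}(z) P_n(z))² = P_{n+1}(z)² P_n(z)²`. -/

open Polynomial

section OrthogonalPolynomials

variable {R : Type*} [CommRing R] {L : R[X] →ₗ[R] R} {P : ℕ → R[X]} {γ : ℕ → R}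

/-- `P` is the sequence of monic orthogonal polynomials of the moment functional `L`. Positivity of
`L` is not part of the notion, so `L (P n * P n)` may vanish. -/
structure IsMonicOrthogonal (L : R[X] →ₗ[R] R) (P : ℕ → R[X]) : Prop where
  isMonicOfDegree (n : ℕ) : IsMonicOfDegree (P n) n
  pairwise : Pairwise fun m n ↦ L (P m * P n) = 0

/-- The three-term recurrence `x P_n = P_{n+1} + γ_n P_{n-1}` of orthogonal polynomials for an even
weight. At `n = 0` the truncated index `n - 1` is harmless because `γ 0 = 0`. -/
structure IsSymmetricRecurrence (P : ℕ → R[X]) (γ : ℕ → R) : Prop where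
  zero : P 0 = 1
  coeff_zero : γ 0 = 0
  X_mul (n : ℕ) : X * P n = P (n + 1) + γ n • P (n - 1)

namespace IsMonicOrthogonal

lemma coeff_self (hP : IsMonicOrthogonal L P) (n : ℕ) : (P n).coeff n = 1 := by
  simpa [(hP.isMonicOfDegree n).natDegree_eq] using (hP.isMonicOfDegree n).monic.coeff_natDegree

lemma degree_eq [Nontrivial R] (hP : IsMonicOrthogonal L P) (n : ℕ) : (P n).degree = n := by
  rw [degree_eq_natDegree (hP.isMonicOfDegree n).ne_zero, (hP.isMonicOfDegree n).natDegree_eq]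

lemma degree_le (hP : IsMonicOrthogonal L P) (n : ℕ) : (P n).degree ≤ n :=
  degree_le_of_natDegree_le (hP.isMonicOfDegree n).natDegree_eq.le

lemma map_mul_eq_zero_of_degree_lt (hP : IsMonicOrthogonal L P) {n : ℕ} {q : R[X]}
    (hq : q.degree < n) : L (q * P n) = 0 := by
  nontriviality R
  let S : Polynomial.Sequence R := ⟨P, hP.degree_eq⟩
  have hS : ∀ i < n, IsUnit (S i).leadingCoeff := fun i _ ↦ by
    rw [show (S i).leadingCoeff = 1 from (hP.isMonicOfDegree i).leadingCoeff_eq]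
    exact isUnit_one
  have hker : degreeLT R n ≤ LinearMap.ker (L ∘ₗ LinearMap.mulRight R (P n)) := by
    rw [← S.span_degreeLT hS, Submodule.span_le]
    rintro _ ⟨m, hm, rfl⟩
    exact hP.pairwise hm.ne
  exact hker (mem_degreeLT.2 hq)

lemma map_mul_eq_coeff_mul_of_degree_le (hP : IsMonicOrthogonal L P) {n : ℕ} {q : R[X]}
    (hq : q.degree ≤ n) : L (q * P n) = q.coeff n * L (P n * P n) := by
  have hlt : (q - q.coeff n • P n).degree < n := by
    rw [degree_lt_iff_coeff_zero]
    intro m hm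
    rcases hm.eq_or_lt with rfl | hm
    · simp [hP.coeff_self]
    · have hm' : (n : WithBot ℕ) < m := by exact_mod_cast hm
      simp [coeff_eq_zero_of_degree_lt (hq.trans_lt hm'),
        coeff_eq_zero_of_degree_lt ((hP.degree_le n).trans_lt hm')]
  have hzero := hP.map_mul_eq_zero_of_degree_lt hlt
  rwa [sub_mul, map_sub, smul_mul_assoc, map_smul, smul_eq_mul, sub_eq_zero] at hzero

lemma degree_derivative_lt (hP : IsMonicOrthogonal L P) (n : ℕ) :
    (derivative (P n)).degree < n := by
  nontriviality R
  exact (Polynomial.degree_derivative_lt (hP.isMonicOfDegree n).ne_zero).trans_eq (hP.degree_eq n)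

lemma map_derivative_mul_succ (hP : IsMonicOrthogonal L P) (n : ℕ) :
    L (derivative (P (n + 1) * P n)) = (n + 1) * L (P n * P n) := by
  have hsucc : L (derivative (P (n + 1)) * P n) = (n + 1) * L (P n * P n) := by
    have hdegree : (derivative (P (n + 1))).degree ≤ n :=
      Order.lt_succ_iff.1 (hP.degree_derivative_lt (n + 1))
    rw [hP.map_mul_eq_coeff_mul_of_degree_le hdegree, coeff_derivative, hP.coeff_self, one_mul]
  have hself : L (derivative (P n) * P (n + 1)) = 0 :=
    hP.map_mul_eq_zero_of_degree_lt
      ((hP.degree_derivative_lt n).trans (by exact_mod_cast n.lt_succ_self))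
  rw [derivative_mul, map_add, hsucc, mul_comm (P (n + 1)), hself, add_zero]

lemma map_derivative_X_mul_self (hP : IsMonicOrthogonal L P) (n : ℕ) :
    L (derivative (X * (P n * P n))) = (2 * n + 1) * L (P n * P n) := by
  have hlead : L (X * derivative (P n) * P n) = n * L (P n * P n) := by
    have hcoeff (m : ℕ) : (X * derivative (P n) : R[X]).coeff m = m * (P n).coeff m := by
      cases m <;> simp [coeff_derivative, mul_comm]
    have hdegree : (X * derivative (P n) : R[X]).degree ≤ n := by
      rw [degree_le_iff_coeff_zero]
      intro m hm
      rw [hcoeff, coeff_eq_zero_of_degree_lt ((hP.degree_le n).trans_lt hm), mul_zero]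
    rw [hP.map_mul_eq_coeff_mul_of_degree_le hdegree, hcoeff, hP.coeff_self, mul_one]
  have hderiv : derivative (X * (P n * P n))
      = P n * P n + (X * derivative (P n) * P n + X * derivative (P n) * P n) := by
    simp only [derivative_mul, derivative_X]
    ring
  rw [hderiv, map_add, map_add, hlead]
  ring

end IsMonicOrthogonal

namespace IsSymmetricRecurrence

lemma one (hγ : IsSymmetricRecurrence P γ) : P 1 = X := by
  simpa [hγ.zero, hγ.coeff_zero] using (hγ.X_mul 0).symm

lemma X_mul_succ (hγ : IsSymmetricRecurrence P γ) (n : ℕ) :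
    X * P (n + 1) = P (n + 2) + γ (n + 1) • P n :=
  hγ.X_mul (n + 1)

lemma X_sq_mul_succ (hγ : IsSymmetricRecurrence P γ) (n : ℕ) :
    X ^ 2 * P (n + 1) = P (n + 3) + (γ (n + 2) + γ (n + 1)) • P (n + 1)
      + (γ (n + 1) * γ n) • P (n - 1) := by
  rw [pow_two, mul_assoc, hγ.X_mul_succ, mul_add, mul_smul_comm, hγ.X_mul_succ, hγ.X_mul]
  module

lemma eval_neg (hγ : IsSymmetricRecurrence P γ) (x : R) (n : ℕ) :
    (P n).eval (-x) = (-1) ^ n * (P n).eval x := by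
  induction n using Nat.twoStepInduction with
  | zero => simp [hγ.zero]
  | one => simp [hγ.one]
  | more n ihn ihn' =>
    have hrec (y : R) : y * (P (n + 1)).eval y = (P (n + 2)).eval y + γ (n + 1) * (P n).eval y := by
      simpa using congrArg (eval y) (hγ.X_mul_succ n)
    have hneg := hrec (-x)
    rw [ihn, ihn'] at hneg
    linear_combination -hneg + (-1) ^ n * hrec x

lemma eval_neg_mul_self (hγ : IsSymmetricRecurrence P γ) (x : R) (n : ℕ) :
    (P n * P n).eval (-x) = (P n * P n).eval x := by
  rw [eval_mul, eval_mul, hγ.eval_neg, mul_mul_mul_comm, ← mul_pow]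
  simp

lemma eval_neg_mul_succ (hγ : IsSymmetricRecurrence P γ) (x : R) (n : ℕ) :
    (P (n + 1) * P n).eval (-x) = -(P (n + 1) * P n).eval x := by
  rw [eval_mul, eval_mul, hγ.eval_neg, hγ.eval_neg, mul_mul_mul_comm, pow_succ', mul_assoc (-1 : R),
    ← mul_pow]
  simp

lemma map_mul_self_succ (hγ : IsSymmetricRecurrence P γ) (hP : IsMonicOrthogonal L P) (n : ℕ) :
    L (P (n + 1) * P (n + 1)) = γ (n + 1) * L (P n * P n) :=
  calc
    L (P (n + 1) * P (n + 1)) = L (X * P n * P (n + 1)) := by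
      simp [hγ.X_mul n, add_mul, hP.pairwise (show n - 1 ≠ n + 1 by omega)]
    _ = L (X * P (n + 1) * P n) := by rw [mul_right_comm]
    _ = γ (n + 1) * L (P n * P n) := by
      simp [hγ.X_mul_succ, add_mul, hP.pairwise (show n + 2 ≠ n by omega)]

lemma map_X_pow_three_mul_succ (hγ : IsSymmetricRecurrence P γ)
    (hP : IsMonicOrthogonal L P) (n : ℕ) :
    L (X ^ 3 * (P (n + 1) * P n))
      = γ (n + 1) * (γ (n + 2) + γ (n + 1) + γ n) * L (P n * P n) := by
  have hsplit : X ^ 3 * (P (n + 1) * P n) = (X ^ 2 * P (n + 1)) * (X * P n) := by ring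
  have hpred : γ n * (γ n * L (P (n - 1) * P (n - 1))) = γ n * L (P n * P n) := by
    cases n with
    | zero => simp [hγ.coeff_zero]
    | succ n => rw [hγ.map_mul_self_succ hP n, add_tsub_cancel_right]
  rw [hsplit, hγ.X_sq_mul_succ, hγ.X_mul]
  simp only [add_mul, mul_add, smul_mul_assoc, mul_smul_comm, map_add, map_smul, smul_eq_mul,
    hP.pairwise (show n + 3 ≠ n + 1 by omega), hP.pairwise (show n + 3 ≠ n - 1 by omega),
    hP.pairwise (show n + 1 ≠ n - 1 by omega), hP.pairwise (show n - 1 ≠ n + 1 by omega),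
    hγ.map_mul_self_succ hP]
  linear_combination γ (n + 1) * hpred

lemma map_X_pow_three_mul_X_mul_self (hγ : IsSymmetricRecurrence P γ)
    (hP : IsMonicOrthogonal L P) (n : ℕ) :
    L (X ^ 3 * (X * (P n * P n)))
      = (γ (n + 1) * (γ (n + 2) + γ (n + 1) + γ n) + γ n * (γ (n + 1) + γ n + γ (n - 1)))
        * L (P n * P n) := by
  have hsplit : X ^ 3 * (X * (P n * P n))
      = X ^ 3 * (P (n + 1) * P n) + γ n • (X ^ 3 * (P n * P (n - 1))) := by
    rw [← mul_assoc X, hγ.X_mul, add_mul, mul_add, smul_mul_assoc, mul_smul_comm,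
      mul_comm (P n) (P (n - 1))]
  have hpred : γ n * L (X ^ 3 * (P n * P (n - 1)))
      = γ n * (γ (n + 1) + γ n + γ (n - 1)) * L (P n * P n) := by
    cases n with
    | zero => simp [hγ.coeff_zero]
    | succ n =>
      rw [add_tsub_cancel_right, hγ.map_X_pow_three_mul_succ hP, hγ.map_mul_self_succ hP]
      ring
  rw [hsplit, map_add, map_smul, smul_eq_mul, hpred, hγ.map_X_pow_three_mul_succ hP]
  ring

end IsSymmetricRecurrence

end OrthogonalPolynomials

section TruncatedFreud

variable {R : Type*} [CommRing R] {L : R[X] →ₗ[R] R} {P : ℕ → R[X]} {γ : ℕ → R} {z c : R}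

/-- The Pearson equation of the weight `e^{-x⁴}` truncated to `[-z, z]`, as a property of its moment
functional `L`. The constant `c` stands for the boundary value `e^{-z⁴}`. -/
def IsTruncatedFreud (L : R[X] →ₗ[R] R) (z c : R) : Prop :=
  ∀ p : R[X], L (derivative p) - 4 * L (X ^ 3 * p) = c * (p.eval z - p.eval (-z))

namespace IsTruncatedFreud

lemma eval_succ_mul_eval (hL : IsTruncatedFreud L z c) (hP : IsMonicOrthogonal L P)
    (hγ : IsSymmetricRecurrence P γ) (n : ℕ) :
    2 * c * ((P (n + 1)).eval z * (P n).eval z)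
      = (n + 1 - 4 * γ (n + 1) * (γ (n + 2) + γ (n + 1) + γ n)) * L (P n * P n) := by
  have hpearson := hL (P (n + 1) * P n)
  rw [hP.map_derivative_mul_succ, hγ.map_X_pow_three_mul_succ hP, hγ.eval_neg_mul_succ,
    eval_mul] at hpearson
  linear_combination -hpearson

lemma eval_sq (hL : IsTruncatedFreud L z c) (hP : IsMonicOrthogonal L P)
    (hγ : IsSymmetricRecurrence P γ) (n : ℕ) :
    2 * c * z * (P n).eval z ^ 2
      = (2 * n + 1 - 4 * γ (n + 1) * (γ (n + 2) + γ (n + 1) + γ n)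
          - 4 * γ n * (γ (n + 1) + γ n + γ (n - 1))) * L (P n * P n) := by
  have hpearson := hL (X * (P n * P n))
  rw [hP.map_derivative_X_mul_self, hγ.map_X_pow_three_mul_X_mul_self hP, eval_mul,
    eval_mul (x := -z), hγ.eval_neg_mul_self, eval_X, eval_X, eval_mul] at hpearson
  linear_combination -hpearson

end IsTruncatedFreud

theorem truncated_freud_nonlinear_relation_general [NoZeroDivisors R]
    (hL : IsTruncatedFreud L z c) (hP : IsMonicOrthogonal L P)
    (hγ : IsSymmetricRecurrence P γ) {n : ℕ} (hn : L (P n * P n) ≠ 0) :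
    z ^ 2 * (n + 1 - 4 * γ (n + 1) * (γ (n + 2) + γ (n + 1) + γ n)) ^ 2 =
      γ (n + 1) * (2 * n + 3 - 4 * γ (n + 1) * (γ (n + 2) + γ (n + 1) + γ n)
          - 4 * γ (n + 2) * (γ (n + 3) + γ (n + 2) + γ (n + 1)))
        * (2 * n + 1 - 4 * γ (n + 1) * (γ (n + 2) + γ (n + 1) + γ n)
          - 4 * γ n * (γ (n + 1) + γ n + γ (n - 1))) := by
  have hmixed := hL.eval_succ_mul_eval hP hγ n
  have hself := hL.eval_sq hP hγ n
  have hsucc := hL.eval_sq hP hγ (n + 1)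
  rw [hγ.map_mul_self_succ hP, add_tsub_cancel_right] at hsucc
  have hprod : z ^ 2 * (2 * c * ((P (n + 1)).eval z * (P n).eval z)) ^ 2
      = (2 * c * z * (P (n + 1)).eval z ^ 2) * (2 * c * z * (P n).eval z ^ 2) := by ring
  rw [hmixed, hself, hsucc] at hprod
  push_cast at hprod
  apply mul_left_cancel₀ (pow_ne_zero 2 hn)
  linear_combination hprod

end TruncatedFreud

section ExponentialWeight

/-- The moment functional `p ↦ ∫_a^b p(x) e^{-V(x)} dx` of the exponential weight with polynomial
potential `V`, truncated to `[a, b]`. -/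
noncomputable def expWeightFunctional (V : ℝ[X]) (a b : ℝ) : ℝ[X] →ₗ[ℝ] ℝ where
  toFun p := ∫ x in a..b, p.eval x * Real.exp (-V.eval x)
  map_add' p q := by
    rw [← intervalIntegral.integral_add (Continuous.intervalIntegrable (by fun_prop) _ _)
      (Continuous.intervalIntegrable (by fun_prop) _ _)]
    simp only [eval_add, add_mul]
  map_smul' r p := by
    simp only [eval_smul, smul_eq_mul, mul_assoc, intervalIntegral.integral_const_mul,
      RingHom.id_apply]

lemma expWeightFunctional_apply (V : ℝ[X]) (a b : ℝ) (p : ℝ[X]) :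
    expWeightFunctional V a b p = ∫ x in a..b, p.eval x * Real.exp (-V.eval x) :=
  rfl

lemma expWeightFunctional_derivative_sub (V : ℝ[X]) (a b : ℝ) (p : ℝ[X]) :
    expWeightFunctional V a b (derivative p - derivative V * p)
      = p.eval b * Real.exp (-V.eval b) - p.eval a * Real.exp (-V.eval a) := by
  refine intervalIntegral.integral_eq_sub_of_hasDerivAt
    (f := fun x ↦ p.eval x * Real.exp (-V.eval x)) (fun x _ ↦ ?_)
    (Continuous.intervalIntegrable (by fun_prop) _ _)
  refine ((p.hasDerivAt x).mul (V.hasDerivAt x).neg.exp).congr_deriv ?_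
  simp only [eval_sub, eval_mul, Pi.neg_apply]
  ring

lemma isTruncatedFreud_expWeightFunctional (z : ℝ) :
    IsTruncatedFreud (expWeightFunctional (X ^ 4) (-z) z) z (Real.exp (-z ^ 4)) := by
  intro p
  have hparts := expWeightFunctional_derivative_sub (X ^ 4) (-z) z p
  have hV : derivative (X ^ 4 : ℝ[X]) * p = (4 : ℝ) • (X ^ 3 * p) := by
    simp only [derivative_X_pow, smul_eq_C_mul, mul_assoc, Nat.cast_ofNat]
  rw [hV, map_sub, map_smul, smul_eq_mul] at hparts
  simp only [eval_pow, eval_X, Even.neg_pow (show Even 4 by decide)] at hparts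
  linear_combination hparts

end ExponentialWeight

/-- Nonlinear difference relation for the recurrence coefficients of the monic
orthogonal polynomials with respect to the weight `e^{-x⁴}` on `[-z, z]`. -/
theorem truncated_freud_nonlinear_relation (z : ℝ) (hz : 0 < z)
    (P : ℕ → Polynomial ℝ) (γ h : ℕ → ℝ)
    (hmonic : ∀ n, (P n).Monic)
    (hdeg : ∀ n, (P n).natDegree = n)
    (horth : ∀ m n, m ≠ n →
      ∫ x in (-z)..z, (P m).eval x * (P n).eval x * Real.exp (-x ^ 4) = 0)
    (hh : ∀ n, h n = ∫ x in (-z)..z, ((P n).eval x) ^ 2 * Real.exp (-x ^ 4))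
    (hhpos : ∀ n, 0 < h n)
    (hP0 : P 0 = 1) (hP1 : P 1 = Polynomial.X)
    (hrec : ∀ n, Polynomial.X * P (n + 1) = P (n + 2) + Polynomial.C (γ (n + 1)) * P n)
    (hγ0 : γ 0 = 0)
    (hγ : ∀ n, γ (n + 1) = h (n + 1) / h n)
    (n : ℕ) (hn : 2 ≤ n) :
    z ^ 2 * ((n : ℝ) / 2 - 2 * γ n * (γ (n + 1) + γ n + γ (n - 1))) ^ 2 =
      γ n * ((n : ℝ) + 1 / 2 - 2 * γ n * (γ (n + 1) + γ n + γ (n - 1))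
          - 2 * γ (n + 1) * (γ (n + 2) + γ (n + 1) + γ n))
        * ((n : ℝ) - 1 / 2 - 2 * γ n * (γ (n + 1) + γ n + γ (n - 1))
          - 2 * γ (n - 1) * (γ n + γ (n - 1) + γ (n - 2))) := by
  have horthogonal : IsMonicOrthogonal (expWeightFunctional (X ^ 4) (-z) z) P :=
    ⟨fun n ↦ ⟨hdeg n, hmonic n⟩, fun m n hmn ↦ by
      simpa [expWeightFunctional_apply] using horth m n hmn⟩
  have hrecurrence : IsSymmetricRecurrence P γ :=
    ⟨hP0, hγ0, fun
      | 0 => by simp [hP0, hP1, hγ0]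
      | n + 1 => by rw [hrec, smul_eq_C_mul, add_tsub_cancel_right]⟩
  obtain ⟨k, rfl⟩ : ∃ k, n = k + 1 := ⟨n - 1, by omega⟩
  have hnorm : expWeightFunctional (X ^ 4) (-z) z (P k * P k) ≠ 0 := by
    simpa [expWeightFunctional_apply, hh, sq] using (hhpos k).ne'
  have hgeneral := truncated_freud_nonlinear_relation_general
    (isTruncatedFreud_expWeightFunctional z) horthogonal hrecurrence hnorm
  rw [add_tsub_cancel_right, show k + 1 - 2 = k - 1 by omega]
  push_cast
  linear_combination (1 / 4) * hgeneral
end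

section
/- For every z > 0 and every n ≥ 1, the monic orthogonal polynomials for the weight e^{−x⁴} on [−z, z] satisfy the differential-difference relation (x² − z²)·P′_n(x) = 4γ_n·𝒜_n(x)·P_{n−1}(x) − ℬ_n(x)·P_n(x) (as an identity of polynomials), and moreover ℬ_n(x) + ℬ_{n+1}(x) = 4x·( 𝒜_n(x) − x²·(x² − z²) ), where 𝒜_n(x) = γ_{n+1}(γ_{n+2} + γ_{n+1} + γ_n) + γ_n(γ_{n+1} + γ_n + γ_{n−1}) + (x² − z²)(x² + γ_{n+1} + γ_n) − n/2 − 1/4 and ℬ_n(x) = x·[ 4γ_n·(γ_{n+1} + γ_n + γ_{n−1} + x² − z²) − n ]. -/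
open Polynomial

/-!
Let `L p = ∫ p(x) e^{-x⁴} dx` over `[-z, z]` and `φ = X² - z²`. Since `φ` vanishes at `±z`,
integration by parts gives the Pearson equation `L (φ p') = L (ψ p)` with `ψ = 4X³φ - 2X`.
Hence, up to explicit multiples of `P_{n+1}` and `P_{n-1}`, the polynomial `φ P_n'` is the
orthogonal projection of `ψ P_n` onto the polynomials of degree `< n`.

That projection is computed one factor of `X` at a time: if `T` is the projection of `p`, then the
projection of `X p` is `X T - d P_n + c γ_n P_{n-1}`, where `c` and `d` are the coefficients of
`P_n` and `P_{n-1}` in `p`. For `p = X^j P_n` these coefficients are the moments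
`L (X^j P_n²) / h_n` and `L (X^j P_n P_{n-1}) / h_{n-1}`, which is where the constants in `𝒜_n` and
`ℬ_n` come from.
-/

section CommRing

variable {R : Type*} [CommRing R] {L : R[X] →ₗ[R] R} {P : ℕ → R[X]} {γ : ℕ → R}

lemma map_C_mul_eq_mul (L : R[X] →ₗ[R] R) (c : R) (p : R[X]) : L (C c * p) = c * L p := by
  rw [← smul_eq_C_mul, map_smul, smul_eq_mul]

lemma natDegree_le_of_mem_degreeLT_succ {p : R[X]} {n : ℕ} (hp : p ∈ degreeLT R (n + 1)) :
    p.natDegree ≤ n :=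
  natDegree_le_of_degree_le (mem_degreeLE.1 (degreeLT_succ_eq_degreeLE (R := R) ▸ hp))

lemma natDegree_X_mul_le_of_mem_degreeLT {p : R[X]} {n : ℕ} (hp : p ∈ degreeLT R n) :
    (X * p).natDegree ≤ n := by
  rcases n with _ | n
  · have hp0 : p = 0 := by simpa [mem_degreeLT, Nat.WithBot.lt_zero_iff] using hp
    simp [hp0]
  · rw [add_comm n]
    exact natDegree_mul_le_of_le natDegree_X_le (natDegree_le_of_mem_degreeLT_succ hp)

lemma C_mul_mem_degreeLT {p : R[X]} {n : ℕ} {a : R} (hp : p ∈ degreeLT R n) :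
    C a * p ∈ degreeLT R n := by
  rw [← smul_eq_C_mul]
  exact Submodule.smul_mem _ a hp

lemma sub_C_coeff_mul_mem_degreeLT {p q : R[X]} (hp : p.Monic) (hq : q.natDegree ≤ p.natDegree) :
    q - C (q.coeff p.natDegree) * p ∈ degreeLT R p.natDegree := by
  rw [mem_degreeLT, degree_lt_iff_coeff_zero]
  intro k hk
  rcases hk.eq_or_lt with rfl | hk
  · simp [hp.coeff_natDegree]
  · simp [coeff_eq_zero_of_natDegree_lt hk, coeff_eq_zero_of_natDegree_lt (hq.trans_lt hk)]

lemma natDegree_mul_derivative_le {φ q : R[X]} {k n : ℕ} (hφ : φ.natDegree ≤ k + 1)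
    (hq : q.natDegree ≤ n) : (φ * derivative q).natDegree ≤ n + k := by
  rcases n with _ | n
  · simp [derivative_of_natDegree_zero (Nat.le_zero.1 hq)]
  · have := natDegree_derivative_le q
    exact natDegree_mul_le.trans (by omega)

lemma coeff_add_mul_derivative {φ q : R[X]} {k n : ℕ} (hφ : φ.natDegree ≤ k + 1)
    (hq : q.natDegree ≤ n) :
    (φ * derivative q).coeff (n + k) = φ.coeff (k + 1) * n * q.coeff n := by
  rcases n with _ | n
  · simp [derivative_of_natDegree_zero (Nat.le_zero.1 hq)]
  · have hq' : (derivative q).natDegree ≤ n := (natDegree_derivative_le q).trans (by omega)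
    rw [show n + 1 + k = k + 1 + n by ring, coeff_mul_add_eq_of_natDegree_le hφ hq',
      coeff_derivative]
    push_cast
    ring

/-- `T` is an orthogonal projection of `p` onto the polynomials of degree `< n`, for the bilinear
form `(p, q) ↦ L (p * q)`. It is a relation because that form may be degenerate. -/
structure IsDegreeLTProj (L : R[X] →ₗ[R] R) (n : ℕ) (p T : R[X]) : Prop where
  mem : T ∈ degreeLT R n
  apply_mul : ∀ q ∈ degreeLT R n, L (q * p) = L (q * T)

namespace IsDegreeLTProj

variable {n : ℕ} {p p' T T' : R[X]}

lemma add (h : IsDegreeLTProj L n p T) (h' : IsDegreeLTProj L n p' T') :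
    IsDegreeLTProj L n (p + p') (T + T') where
  mem := add_mem h.mem h'.mem
  apply_mul q hq := by simp only [mul_add, map_add, h.apply_mul q hq, h'.apply_mul q hq]

lemma C_mul (a : R) (h : IsDegreeLTProj L n p T) : IsDegreeLTProj L n (C a * p) (C a * T) where
  mem := C_mul_mem_degreeLT h.mem
  apply_mul q hq := by simp only [mul_left_comm q, map_C_mul_eq_mul, h.apply_mul q hq]

end IsDegreeLTProj

/-- `P` is the monic orthogonal polynomial sequence of the quasi-definite functional `L`. -/
structure IsMonicOPS (L : R[X] →ₗ[R] R) (P : ℕ → R[X]) : Prop where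
  monic : ∀ n, (P n).Monic
  natDegree_eq : ∀ n, (P n).natDegree = n
  orthogonal : ∀ m n, m ≠ n → L (P m * P n) = 0
  norm_ne_zero : ∀ n, L (P n * P n) ≠ 0

namespace IsMonicOPS

lemma coeff_self (hP : IsMonicOPS L P) (n : ℕ) : (P n).coeff n = 1 := by
  simpa only [hP.natDegree_eq] using (hP.monic n).coeff_natDegree

lemma mem_degreeLT_of_lt (hP : IsMonicOPS L P) {m n : ℕ} (hmn : m < n) : P m ∈ degreeLT R n :=
  mem_degreeLT.2 <| degree_le_natDegree.trans_lt <| by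
    rw [hP.natDegree_eq]; exact_mod_cast hmn

lemma sub_C_coeff_mul_mem (hP : IsMonicOPS L P) {n : ℕ} {q : R[X]} (hq : q.natDegree ≤ n) :
    q - C (q.coeff n) * P n ∈ degreeLT R n := by
  simpa only [hP.natDegree_eq] using
    sub_C_coeff_mul_mem_degreeLT (hP.monic n) (hq.trans_eq (hP.natDegree_eq n).symm)

lemma span_image_Iio (hP : IsMonicOPS L P) (n : ℕ) :
    Submodule.span R (P '' Set.Iio n) = degreeLT R n := by
  nontriviality R
  let S : Polynomial.Sequence R :=
    ⟨P, fun i ↦ by rw [degree_eq_natDegree (hP.monic i).ne_zero, hP.natDegree_eq]⟩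
  exact S.span_degreeLT fun i _ ↦ by
    rw [show (S i).leadingCoeff = 1 from hP.monic i]; exact isUnit_one

lemma apply_mul_eq_zero_of_mem_degreeLT (hP : IsMonicOPS L P) {n : ℕ} {q : R[X]}
    (hq : q ∈ degreeLT R n) : L (q * P n) = 0 := by
  have hle : degreeLT R n ≤ LinearMap.ker (L ∘ₗ LinearMap.mulRight R (P n)) := by
    rw [← hP.span_image_Iio, Submodule.span_le]
    rintro _ ⟨k, hk, rfl⟩
    exact hP.orthogonal k n (Set.mem_Iio.1 hk).ne
  exact hle hq

lemma apply_mul_eq_coeff_mul (hP : IsMonicOPS L P) {n : ℕ} {q : R[X]} (hq : q.natDegree ≤ n) :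
    L (q * P n) = q.coeff n * L (P n * P n) := by
  rw [← sub_eq_zero, ← map_C_mul_eq_mul, ← map_sub, ← mul_assoc, ← sub_mul]
  exact hP.apply_mul_eq_zero_of_mem_degreeLT (hP.sub_C_coeff_mul_mem hq)

lemma apply_X_pow_mul_mul_add (hP : IsMonicOPS L P) (j n : ℕ) :
    L (X ^ j * P n * P (n + j)) = L (P (n + j) * P (n + j)) := by
  have hdeg : (X ^ j * P n).natDegree ≤ n + j :=
    natDegree_mul_le.trans <| by
      rw [hP.natDegree_eq, add_comm]; exact Nat.add_le_add_left (natDegree_X_pow_le j) n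
  rw [hP.apply_mul_eq_coeff_mul hdeg, coeff_X_pow_mul, hP.coeff_self, one_mul]

lemma isDegreeLTProj_self_zero (hP : IsMonicOPS L P) (n : ℕ) : IsDegreeLTProj L n (P n) 0 where
  mem := zero_mem _
  apply_mul q hq := by rw [hP.apply_mul_eq_zero_of_mem_degreeLT hq, mul_zero, map_zero]

end IsMonicOPS

/-- `P` is the monic orthogonal polynomial sequence of `L`, and its three-term recurrence has no
diagonal coefficients, as for a symmetric weight. At `n = 0` the truncated index in `P (n - 1)` is
harmless because `γ 0 = 0`. -/
structure IsSymmetricOPS (L : R[X] →ₗ[R] R) (P : ℕ → R[X]) (γ : ℕ → R) : Prop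
    extends IsMonicOPS L P where
  gamma_zero : γ 0 = 0
  X_mul : ∀ n, X * P n = P (n + 1) + C (γ n) * P (n - 1)

namespace IsSymmetricOPS

lemma apply_X_pow_succ_mul (hP : IsSymmetricOPS L P γ) (j n : ℕ) (q : R[X]) :
    L (X ^ (j + 1) * P n * q) = L (X ^ j * P (n + 1) * q) + γ n * L (X ^ j * P (n - 1) * q) := by
  rw [pow_succ, mul_assoc (X ^ j), hP.X_mul, ← map_C_mul_eq_mul, ← map_add]
  congr 1
  ring

lemma apply_X_pow_mul_mul_eq_zero_of_odd (hP : IsSymmetricOPS L P γ) {j m n : ℕ}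
    (hodd : Odd (j + m + n)) : L (X ^ j * P m * P n) = 0 := by
  induction j generalizing m with
  | zero =>
    rw [pow_zero, one_mul]
    exact hP.orthogonal m n (by rintro rfl; exact (Nat.not_odd_iff_even.2 (by simp)) hodd)
  | succ j ih =>
    rw [hP.apply_X_pow_succ_mul, ih (by convert hodd using 1; ring), zero_add]
    rcases m with _ | m
    · rw [hP.gamma_zero, zero_mul]
    · rw [Nat.add_sub_cancel, ih (by rw [Nat.odd_iff] at hodd ⊢; omega), mul_zero]

lemma gamma_succ_mul_norm (hP : IsSymmetricOPS L P γ) (n : ℕ) :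
    γ (n + 1) * L (P n * P n) = L (P (n + 1) * P (n + 1)) := by
  rw [← hP.apply_X_pow_mul_mul_add 1 n, mul_right_comm, hP.apply_X_pow_succ_mul 0, pow_zero,
    one_mul, hP.orthogonal (n + 1 + 1) n (by omega), zero_add, one_mul, Nat.add_sub_cancel]

lemma apply_X_sq_mul_self_mul_self (hP : IsSymmetricOPS L P γ) (n : ℕ) :
    L (X ^ 2 * P (n + 1) * P (n + 1)) =
      (γ (n + 2) + γ (n + 1)) * L (P (n + 1) * P (n + 1)) := by
  have hup := hP.apply_X_pow_mul_mul_add 1 (n + 1)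
  have hdown := hP.apply_X_pow_mul_mul_add 1 n
  rw [hP.apply_X_pow_succ_mul 1, Nat.add_sub_cancel, hdown, mul_right_comm, hup,
    ← hP.gamma_succ_mul_norm (n + 1)]
  ring

lemma apply_X_pow_three_mul_succ_mul_self (hP : IsSymmetricOPS L P γ) (n : ℕ) :
    L (X ^ 3 * P (n + 1) * P n) =
      (γ (n + 2) + γ (n + 1) + γ n) * L (P (n + 1) * P (n + 1)) := by
  have hlow : γ n * L (X ^ 2 * P (n - 1) * P (n + 1)) = γ n * L (P (n + 1) * P (n + 1)) := by
    rcases n with _ | n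
    · simp only [hP.gamma_zero, zero_mul]
    · rw [Nat.add_sub_cancel, hP.apply_X_pow_mul_mul_add 2 n]
  rw [mul_right_comm, hP.apply_X_pow_succ_mul 2, hP.apply_X_sq_mul_self_mul_self, hlow]
  ring

lemma apply_X_pow_four_mul_self_mul_self (hP : IsSymmetricOPS L P γ) (n : ℕ) :
    L (X ^ 4 * P (n + 1) * P (n + 1)) =
      (γ (n + 2) * (γ (n + 3) + γ (n + 2) + γ (n + 1)) +
        γ (n + 1) * (γ (n + 2) + γ (n + 1) + γ n)) * L (P (n + 1) * P (n + 1)) := by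
  rw [hP.apply_X_pow_succ_mul 3, Nat.add_sub_cancel, hP.apply_X_pow_three_mul_succ_mul_self (n + 1),
    mul_right_comm, hP.apply_X_pow_three_mul_succ_mul_self n, ← hP.gamma_succ_mul_norm (n + 1)]
  ring

lemma apply_freud_mul_self_eq_zero (hP : IsSymmetricOPS L P γ) (s : R) (n : ℕ) :
    L ((C 4 * X ^ 3 * (X ^ 2 - C s) - C 2 * X) * (P n * P n)) = 0 := by
  have hodd (j : ℕ) (hj : Odd j) : L (X ^ j * P n * P n) = 0 :=
    hP.apply_X_pow_mul_mul_eq_zero_of_odd (by rw [Nat.odd_iff] at hj ⊢; omega)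
  have hexpand : (C 4 * X ^ 3 * (X ^ 2 - C s) - C 2 * X) * (P n * P n) =
      C 4 * (X ^ 5 * P n * P n) - C (4 * s) * (X ^ 3 * P n * P n) -
        C 2 * (X ^ 1 * P n * P n) := by
    rw [C_mul]
    ring
  rw [hexpand]
  simp only [map_sub, map_C_mul_eq_mul, hodd 5 (by decide), hodd 3 (by decide), hodd 1 (by decide)]
  ring

lemma isDegreeLTProj_mul_derivative (hP : IsSymmetricOPS L P γ) {m : ℕ} {φ ψ T : R[X]}
    (hφ : φ.natDegree ≤ 2) (hpearson : ∀ p, L (φ * derivative p) = L (ψ * p))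
    (hT : IsDegreeLTProj L (m + 1) (ψ * P (m + 1)) T) :
    IsDegreeLTProj L (m + 1) (φ * derivative (P (m + 1)))
      (T - C (φ.coeff 2 * m * γ (m + 1)) * P m) where
  mem := sub_mem hT.mem (C_mul_mem_degreeLT (hP.mem_degreeLT_of_lt m.lt_succ_self))
  apply_mul q hq := by
    have hqm : q.natDegree ≤ m := natDegree_le_of_mem_degreeLT_succ hq
    have hparts : L (φ * derivative q * P (m + 1)) + L (q * (φ * derivative (P (m + 1)))) =
        L (q * (ψ * P (m + 1))) := by
      rw [mul_left_comm q ψ, ← hpearson, derivative_mul, ← map_add]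
      congr 1
      ring
    rw [hP.apply_mul_eq_coeff_mul (natDegree_mul_derivative_le hφ hqm),
      coeff_add_mul_derivative hφ hqm, hT.apply_mul q hq] at hparts
    rw [mul_sub, map_sub, mul_left_comm q (C _), map_C_mul_eq_mul, hP.apply_mul_eq_coeff_mul hqm]
    linear_combination hparts + φ.coeff 2 * m * q.coeff m * hP.gamma_succ_mul_norm m

end IsSymmetricOPS

end CommRing

section IsDomain

variable {R : Type*} [CommRing R] [IsDomain R] {L : R[X] →ₗ[R] R} {P : ℕ → R[X]} {γ : ℕ → R}

lemma apply_mul_mul_derivative_self_eq_zero [NeZero (2 : R)] {φ ψ p : R[X]}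
    (hpearson : ∀ p, L (φ * derivative p) = L (ψ * p)) (hp : L (ψ * (p * p)) = 0) :
    L (p * (φ * derivative p)) = 0 := by
  rw [← hpearson, derivative_mul, mul_comm _ p, ← two_mul, mul_left_comm, mul_left_comm φ,
    ← C_ofNat, map_C_mul_eq_mul] at hp
  exact (mul_eq_zero.1 hp).resolve_left two_ne_zero

namespace IsMonicOPS

lemma eq_zero_of_forall_apply_mul_eq_zero (hP : IsMonicOPS L P) {n : ℕ} {p : R[X]}
    (hp : p ∈ degreeLT R n) (horth : ∀ q ∈ degreeLT R n, L (q * p) = 0) : p = 0 := by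
  by_contra hp0
  have hlt : p.natDegree < n := (natDegree_lt_iff_degree_lt hp0).2 (mem_degreeLT.1 hp)
  have hlead := hP.apply_mul_eq_coeff_mul (le_refl p.natDegree)
  rw [mul_comm, horth _ (hP.mem_degreeLT_of_lt hlt)] at hlead
  exact mul_ne_zero (leadingCoeff_ne_zero.2 hp0) (hP.norm_ne_zero _) hlead.symm

lemma eq_C_coeff_mul_add_of_isDegreeLTProj (hP : IsMonicOPS L P) {n : ℕ} {p T : R[X]}
    (hp : p.natDegree ≤ n + 1) (hpn : L (P n * p) = 0) (hT : IsDegreeLTProj L n p T) :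
    p = C (p.coeff (n + 1)) * P (n + 1) + T := by
  have hTmem : T ∈ degreeLT R (n + 1) := degreeLT_mono n.le_succ hT.mem
  rw [← sub_eq_zero, ← sub_sub]
  refine hP.eq_zero_of_forall_apply_mul_eq_zero (sub_mem (hP.sub_C_coeff_mul_mem hp) hTmem)
    fun q hq ↦ ?_
  have hlow := hT.apply_mul _ (hP.sub_C_coeff_mul_mem (natDegree_le_of_mem_degreeLT_succ hq))
  have hTn : L (P n * T) = 0 := by rw [mul_comm, hP.apply_mul_eq_zero_of_mem_degreeLT hT.mem]
  simp only [sub_mul, mul_assoc, map_sub, map_C_mul_eq_mul, hpn, hTn] at hlow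
  rw [mul_sub, mul_sub, mul_left_comm, map_sub, map_sub, map_C_mul_eq_mul,
    hP.apply_mul_eq_zero_of_mem_degreeLT hq]
  linear_combination hlow

lemma coeff_eq_of_isDegreeLTProj (hP : IsMonicOPS L P) {m : ℕ} {p T : R[X]} {d : R}
    (hT : IsDegreeLTProj L (m + 1) p T) (hd : L (p * P m) = d * L (P m * P m)) :
    T.coeff m = d := by
  apply mul_right_cancel₀ (hP.norm_ne_zero m)
  rw [← hP.apply_mul_eq_coeff_mul (natDegree_le_of_mem_degreeLT_succ hT.mem), mul_comm,
    ← hT.apply_mul _ (hP.mem_degreeLT_of_lt m.lt_succ_self), mul_comm, hd]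

end IsMonicOPS

namespace IsSymmetricOPS

lemma isDegreeLTProj_X_mul (hP : IsSymmetricOPS L P γ) {m : ℕ} {p T : R[X]} {c d : R}
    (hT : IsDegreeLTProj L (m + 1) p T)
    (hc : L (p * P (m + 1)) = c * L (P (m + 1) * P (m + 1)))
    (hd : L (p * P m) = d * L (P m * P m)) :
    IsDegreeLTProj L (m + 1) (X * p) (X * T - C d * P (m + 1) + C (c * γ (m + 1)) * P m) where
  mem := by
    have hXT : (X * T).natDegree ≤ m + 1 :=
      natDegree_X_mul_le_of_mem_degreeLT hT.mem
    have hlow := hP.sub_C_coeff_mul_mem hXT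
    rw [coeff_X_mul, hP.coeff_eq_of_isDegreeLTProj hT hd] at hlow
    exact add_mem hlow (C_mul_mem_degreeLT (hP.mem_degreeLT_of_lt m.lt_succ_self))
  apply_mul q hq := by
    have hqm : q.natDegree ≤ m := natDegree_le_of_mem_degreeLT_succ hq
    have hXq : (X * q).natDegree ≤ m + 1 := natDegree_X_mul_le_of_mem_degreeLT hq
    have hlow := hT.apply_mul _ (hP.sub_C_coeff_mul_mem hXq)
    have hTn : L (P (m + 1) * T) = 0 := by
      rw [mul_comm, hP.apply_mul_eq_zero_of_mem_degreeLT hT.mem]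
    simp only [coeff_X_mul, sub_mul, mul_assoc, mul_left_comm X q, map_sub, map_C_mul_eq_mul,
      mul_comm (P (m + 1)) p, hc, hTn] at hlow
    simp only [mul_add, mul_sub, map_add, map_sub, mul_left_comm q (C _), map_C_mul_eq_mul,
      hP.apply_mul_eq_zero_of_mem_degreeLT hq, hP.apply_mul_eq_coeff_mul hqm]
    linear_combination hlow - c * q.coeff m * hP.gamma_succ_mul_norm m

lemma isDegreeLTProj_X_sq_mul (hP : IsSymmetricOPS L P γ) {m : ℕ} {p T : R[X]} {c d : R}
    (hT : IsDegreeLTProj L (m + 1) p T)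
    (hp : L (p * P (m + 1)) = 0) (hd : L (p * P m) = d * L (P m * P m))
    (hc : L (X * p * P (m + 1)) = c * L (P (m + 1) * P (m + 1))) (hXp : L (X * p * P m) = 0) :
    IsDegreeLTProj L (m + 1) (X ^ 2 * p)
      (X * (X * T - C d * P (m + 1)) + C (c * γ (m + 1)) * P m) := by
  have hX := hP.isDegreeLTProj_X_mul hT (c := 0) (by rw [hp, zero_mul]) hd
  have hXX := hP.isDegreeLTProj_X_mul hX (d := 0) hc (by rw [hXp, zero_mul])
  simpa [← mul_assoc, ← sq] using hXX

lemma isDegreeLTProj_X_mul_self (hP : IsSymmetricOPS L P γ) (m : ℕ) :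
    IsDegreeLTProj L (m + 1) (X * P (m + 1)) (C (γ (m + 1)) * P m) := by
  have h := hP.isDegreeLTProj_X_mul (hP.isDegreeLTProj_self_zero (m + 1)) (c := 1) (d := 0)
    (one_mul _).symm (by rw [hP.orthogonal (m + 1) m (by omega), zero_mul])
  simpa using h

lemma isDegreeLTProj_X_pow_three_mul_self (hP : IsSymmetricOPS L P γ) (m : ℕ) :
    IsDegreeLTProj L (m + 1) (X ^ 3 * P (m + 1))
      (C (γ (m + 1)) * ((X ^ 2 + C (γ (m + 2) + γ (m + 1))) * P m - X * P (m + 1))) := by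
  have hdiag : L (X * P (m + 1) * P (m + 1)) = 0 := by
    simpa using hP.apply_X_pow_mul_mul_eq_zero_of_odd (j := 1) (m := m + 1) (n := m + 1)
      (by rw [Nat.odd_iff]; omega)
  have hoff : L (X * P (m + 1) * P m) = γ (m + 1) * L (P m * P m) := by
    simpa [mul_right_comm, hP.gamma_succ_mul_norm] using hP.apply_X_pow_mul_mul_add 1 m
  have h := hP.isDegreeLTProj_X_sq_mul (hP.isDegreeLTProj_X_mul_self m) hdiag hoff
    (c := γ (m + 2) + γ (m + 1)) (by rw [← mul_assoc X X, ← sq, hP.apply_X_sq_mul_self_mul_self])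
    (by
      rw [← mul_assoc X X, ← sq]
      exact hP.apply_X_pow_mul_mul_eq_zero_of_odd (by rw [Nat.odd_iff]; omega))
  convert h using 1
  · ring
  · simp only [C_mul]
    ring

lemma isDegreeLTProj_X_pow_five_mul_self (hP : IsSymmetricOPS L P γ) (m : ℕ) :
    IsDegreeLTProj L (m + 1) (X ^ 5 * P (m + 1))
      (C (γ (m + 1)) *
        ((X ^ 4 + C (γ (m + 2) + γ (m + 1)) * X ^ 2 +
            C (γ (m + 2) * (γ (m + 3) + γ (m + 2) + γ (m + 1)) +
              γ (m + 1) * (γ (m + 2) + γ (m + 1) + γ m))) * P m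
          - (X ^ 3 + C (γ (m + 2) + γ (m + 1) + γ m) * X) * P (m + 1))) := by
  have hoff : L (X ^ 3 * P (m + 1) * P m) =
      ((γ (m + 2) + γ (m + 1) + γ m) * γ (m + 1)) * L (P m * P m) := by
    rw [hP.apply_X_pow_three_mul_succ_mul_self, mul_assoc, hP.gamma_succ_mul_norm]
  have h := hP.isDegreeLTProj_X_sq_mul (hP.isDegreeLTProj_X_pow_three_mul_self m)
    (hP.apply_X_pow_mul_mul_eq_zero_of_odd (by rw [Nat.odd_iff]; omega)) hoff
    (by rw [← mul_assoc X, ← pow_succ', hP.apply_X_pow_four_mul_self_mul_self])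
    (by
      rw [← mul_assoc X, ← pow_succ']
      exact hP.apply_X_pow_mul_mul_eq_zero_of_odd (by rw [Nat.odd_iff]; omega))
  convert h using 1
  · ring
  · simp only [C_mul]
    ring

theorem mul_derivative_eq [NeZero (2 : R)] (hP : IsSymmetricOPS L P γ) {m : ℕ} {φ ψ T : R[X]}
    (hφ : φ.natDegree ≤ 2) (hpearson : ∀ p, L (φ * derivative p) = L (ψ * p))
    (hdiag : L (ψ * (P (m + 1) * P (m + 1))) = 0)
    (hT : IsDegreeLTProj L (m + 1) (ψ * P (m + 1)) T) :
    φ * derivative (P (m + 1)) =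
      C (φ.coeff 2) * (C (m + 1 : R) * P (m + 2) - C (m * γ (m + 1)) * P m) + T := by
  have hdeg : (P (m + 1)).natDegree ≤ m + 1 := (hP.natDegree_eq _).le
  rw [hP.eq_C_coeff_mul_add_of_isDegreeLTProj (natDegree_mul_derivative_le hφ hdeg)
    (apply_mul_mul_derivative_self_eq_zero hpearson hdiag)
    (hP.isDegreeLTProj_mul_derivative hφ hpearson hT),
    coeff_add_mul_derivative hφ hdeg, hP.coeff_self]
  simp only [C_mul, C_add, C_1, Nat.cast_add, Nat.cast_one]
  ring

theorem freud_ladder [NeZero (2 : R)] (hP : IsSymmetricOPS L P γ) {s : R}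
    (hpearson : ∀ p, L ((X ^ 2 - C s) * derivative p) =
      L ((C 4 * X ^ 3 * (X ^ 2 - C s) - C 2 * X) * p)) (m : ℕ) :
    (X ^ 2 - C s) * derivative (P (m + 1)) =
      C (γ (m + 1)) *
          (C 4 * (C (γ (m + 2) * (γ (m + 3) + γ (m + 2) + γ (m + 1)) +
              γ (m + 1) * (γ (m + 2) + γ (m + 1) + γ m)) +
            (X ^ 2 - C s) * (X ^ 2 + C (γ (m + 2) + γ (m + 1)))) - C (2 * m + 3 : R)) * P m -
        X * (C (4 * γ (m + 1)) * (X ^ 2 + C (γ (m + 2) + γ (m + 1) + γ m - s)) - C (m + 1 : R)) *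
          P (m + 1) := by
  have hφ : (X ^ 2 - C s).natDegree ≤ 2 := by compute_degree
  have hφ2 : (X ^ 2 - C s).coeff 2 = 1 := by simp
  have hT := ((hP.isDegreeLTProj_X_pow_five_mul_self m).C_mul 4).add
    (((hP.isDegreeLTProj_X_pow_three_mul_self m).C_mul (-(4 * s))).add
      ((hP.isDegreeLTProj_X_mul_self m).C_mul (-2)))
  have hψ : C 4 * (X ^ 5 * P (m + 1)) + (C (-(4 * s)) * (X ^ 3 * P (m + 1)) +
      C (-2) * (X * P (m + 1))) = (C 4 * X ^ 3 * (X ^ 2 - C s) - C 2 * X) * P (m + 1) := by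
    simp only [C_neg, C_mul]
    ring
  rw [hψ] at hT
  rw [hP.mul_derivative_eq hφ hpearson (hP.apply_freud_mul_self_eq_zero s (m + 1)) hT, hφ2,
    eq_sub_of_add_eq (hP.X_mul (m + 1)).symm]
  simp only [Nat.add_sub_cancel, C_neg, C_mul, C_add, C_sub, C_1, C_ofNat]
  ring

end IsSymmetricOPS

end IsDomain

/-- The functional `p ↦ ∫ x in a..b, p(x) w(x)` of a weight `w`. -/
noncomputable def weightFunctional (w : C(ℝ, ℝ)) (a b : ℝ) : ℝ[X] →ₗ[ℝ] ℝ where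
  toFun p := ∫ x in a..b, p.eval x * w x
  map_add' p q := by
    simp only [eval_add, add_mul]
    exact intervalIntegral.integral_add (Continuous.intervalIntegrable (by fun_prop) _ _)
      (Continuous.intervalIntegrable (by fun_prop) _ _)
  map_smul' c p := by
    simp only [eval_smul, smul_eq_mul, mul_assoc, intervalIntegral.integral_const_mul,
      RingHom.id_apply]

lemma weightFunctional_apply (w : C(ℝ, ℝ)) (a b : ℝ) (p : ℝ[X]) :
    weightFunctional w a b p = ∫ x in a..b, p.eval x * w x :=
  rfl

lemma weightFunctional_mul_derivative {w : C(ℝ, ℝ)} {a b : ℝ} {φ V : ℝ[X]}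
    (hw : ∀ x, HasDerivAt w (-V.eval x * w x) x) (ha : φ.eval a = 0) (hb : φ.eval b = 0)
    (p : ℝ[X]) :
    weightFunctional w a b (φ * derivative p) =
      weightFunctional w a b ((V * φ - derivative φ) * p) := by
  have hderiv (x : ℝ) : HasDerivAt (fun x ↦ (φ * p).eval x * w x)
      ((φ * derivative p - (V * φ - derivative φ) * p).eval x * w x) x := by
    refine (((φ * p).hasDerivAt x).mul (hw x)).congr_deriv ?_
    simp only [derivative_mul, eval_add, eval_sub, eval_mul]
    ring
  rw [← sub_eq_zero, ← map_sub, weightFunctional_apply,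
    intervalIntegral.integral_eq_sub_of_hasDerivAt (fun x _ ↦ hderiv x)
      (Continuous.intervalIntegrable (by fun_prop) _ _)]
  simp only [eval_mul, ha, hb, zero_mul, sub_self]

/-- The quartic Freud weight `exp (-x⁴)`, bundled for use in `weightFunctional`. -/
noncomputable def freudWeight : C(ℝ, ℝ) :=
  ⟨fun x ↦ Real.exp (-x ^ 4), by fun_prop⟩

lemma freudWeight_apply (x : ℝ) : freudWeight x = Real.exp (-x ^ 4) :=
  rfl

lemma hasDerivAt_freudWeight (x : ℝ) :
    HasDerivAt freudWeight (-(C 4 * X ^ 3 : ℝ[X]).eval x * freudWeight x) x :=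
  (hasDerivAt_pow 4 x).neg.exp.congr_deriv <| by
    simp only [freudWeight_apply, Pi.neg_apply, eval_mul, eval_C, eval_pow, eval_X, Nat.cast_ofNat]
    ring

lemma weightFunctional_freudWeight_pearson (z : ℝ) (p : ℝ[X]) :
    weightFunctional freudWeight (-z) z ((X ^ 2 - C (z ^ 2)) * derivative p) =
      weightFunctional freudWeight (-z) z
        ((C 4 * X ^ 3 * (X ^ 2 - C (z ^ 2)) - C 2 * X) * p) := by
  rw [weightFunctional_mul_derivative hasDerivAt_freudWeight (by simp) (by simp), derivative_sub,
    derivative_C, derivative_X_sq, sub_zero]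

/-- Differential-difference (ladder) relation
`(x²-z²)·P'_n = 4γ_n·𝒜_n·P_{n-1} - ℬ_n·P_n` together with
`ℬ_n + ℬ_{n+1} = 4x(𝒜_n - x²(x²-z²))` for the monic orthogonal polynomials for
the weight `e^{-x⁴}` on `[-z, z]`. -/
theorem truncated_freud_ladder_relation (z : ℝ) (hz : 0 < z)
    (P : ℕ → Polynomial ℝ) (γ h : ℕ → ℝ)
    (hmonic : ∀ n, (P n).Monic)
    (hdeg : ∀ n, (P n).natDegree = n)
    (horth : ∀ m n, m ≠ n →
      ∫ x in (-z)..z, (P m).eval x * (P n).eval x * Real.exp (-x ^ 4) = 0)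
    (hh : ∀ n, h n = ∫ x in (-z)..z, ((P n).eval x) ^ 2 * Real.exp (-x ^ 4))
    (hhpos : ∀ n, 0 < h n)
    (hP0 : P 0 = 1) (hP1 : P 1 = Polynomial.X)
    (hrec : ∀ n, Polynomial.X * P (n + 1) = P (n + 2) + Polynomial.C (γ (n + 1)) * P n)
    (hγ0 : γ 0 = 0)
    (hγ : ∀ n, γ (n + 1) = h (n + 1) / h n)
    (A B : ℕ → Polynomial ℝ)
    (hA : ∀ m, A m =
      C (γ (m + 1) * (γ (m + 2) + γ (m + 1) + γ m)
          + γ m * (γ (m + 1) + γ m + γ (m - 1)) - (m : ℝ) / 2 - 1 / 4)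
        + (X ^ 2 - C (z ^ 2)) * (X ^ 2 + C (γ (m + 1) + γ m)))
    (hB : ∀ m, B m =
      X * (C (4 * γ m) * (X ^ 2 + C (γ (m + 1) + γ m + γ (m - 1) - z ^ 2)) - C (m : ℝ)))
    (n : ℕ) (hn : 1 ≤ n) :
    (X ^ 2 - C (z ^ 2)) * derivative (P n) = C (4 * γ n) * A n * P (n - 1) - B n * P n
    ∧ B n + B (n + 1) = C 4 * X * (A n - X ^ 2 * (X ^ 2 - C (z ^ 2))) := by
  obtain ⟨m, rfl⟩ := Nat.exists_eq_add_of_le' hn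
  have hnorm (k : ℕ) : weightFunctional freudWeight (-z) z (P k * P k) = h k := by
    simp only [weightFunctional_apply, freudWeight_apply, hh, ← sq, eval_pow]
  have hP : IsSymmetricOPS (weightFunctional freudWeight (-z) z) P γ :=
    { monic := hmonic
      natDegree_eq := hdeg
      orthogonal := fun i j hij ↦ by
        simpa only [weightFunctional_apply, freudWeight_apply, eval_mul] using horth i j hij
      norm_ne_zero := fun k ↦ by rw [hnorm]; exact (hhpos k).ne'
      gamma_zero := hγ0
      X_mul := by
        rintro (_ | k)
        · simp [hP0, hP1, hγ0]
        · exact hrec k }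
  rw [hP.freud_ladder (weightFunctional_freudWeight_pearson z), hA, hB, hB]
  constructor <;> refine Polynomial.funext fun x ↦ ?_ <;>
    simp only [Nat.add_sub_cancel, Nat.cast_add, Nat.cast_one, eval_add, eval_sub, eval_mul,
      eval_pow, eval_X, eval_C] <;>
    ring
end
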